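/- Let k ≥ 3, 1 ≤ ℓ ≤ k−1, a ≥ 1, 0 ≤ x ≤ k be integers, and set b = 2x + ℓ + (k−ℓ)a. Suppose 0 < ε ≤ ℓ/(3a) and 1/n ≪ 1/C ≪ γ, 1/a, 1/k. Let G = 𝔾^{(k)}(n,p) with p ≥ n^{−(k−ℓ)−ε} if ℓ ≥ 2 and p ≥ C·n^{−(k−1)} if ℓ = 1. Then with probability 1 − o(1), at most 2·p^a·n^b ordered b-subsets of V(G) span labeled copies of P_{a,x}. -/

import Mathlib

open Finset
open scoped Classical

/-- All `k`-subsets of `Fin n` (the possible edges of a `k`-graph on `n` vertices). -/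
def kSets (n k : ℕ) : Finset (Finset (Fin n)) := Finset.univ.powersetCard k

/-- The probability that the binomial random `k`-graph `G^{(k)}(n,p)` (each `k`-set is an
edge independently with probability `p`) has an edge set satisfying the property `A`. -/
noncomputable def gProb (n k : ℕ) (p : ℝ) (A : Finset (Finset (Fin n)) → Prop) : ℝ :=
  ∑ E ∈ (kSets n k).powerset.filter (fun E => A E),
    p ^ E.card * (1 - p) ^ ((kSets n k).card - E.card)

/-- Expectation of a random variable `f` of the random `k`-graph `G^{(k)}(n,p)`. -/
noncomputable def gExpect (n k : ℕ) (p : ℝ) (f : Finset (Finset (Fin n)) → ℝ) : ℝ :=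
  ∑ E ∈ (kSets n k).powerset,
    p ^ E.card * (1 - p) ^ ((kSets n k).card - E.card) * f E

/-- The degree of a vertex set `S` in the `k`-graph with edge set `E`: the number of edges
containing `S` (equivalently, the number of `(k-|S|)`-sets `T` with `S ∪ T ∈ E`). -/
def degOf {n : ℕ} (E : Finset (Finset (Fin n))) (S : Finset (Fin n)) : ℕ :=
  (E.filter (fun e => S ⊆ e)).card

/-- The minimum vertex degree (minimum 1-degree) of a `k`-graph. -/
noncomputable def minVertexDeg {n : ℕ} (E : Finset (Finset (Fin n))) : ℕ :=
  sInf {d : ℕ | ∃ v : Fin n, degOf E {v} = d}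

/-- The index set of the `i`-th edge of the path `P_{a,x}`:
`{x + i*d, x + i*d + 1, …, x + i*d + k - 1}` (here `d = k - ℓ`). -/
def edgeIdx (k d x i : ℕ) : Finset ℕ := (Finset.range k).image (fun j => x + i * d + j)

/-- The ordered `b`-tuple `w` spans a labeled copy of `P_{a,x}` (the `k`-uniform `ℓ`-path
with `a` edges, preceded and followed by `x` isolated vertices) in the edge set `E`. -/
def SpansPax {n : ℕ} (k ℓ a x : ℕ) (E : Finset (Finset (Fin n))) {b : ℕ}
    (w : Fin b → Fin n) : Prop :=
  Function.Injective w ∧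
  ∀ i < a,
    ((Finset.univ.filter (fun m : Fin b => (m : ℕ) ∈ edgeIdx k (k - ℓ) x i)).image w) ∈ E

/-- The ordered tuple `w` spans a labeled copy of the `ℓ`-path `P_a` of length `a` in `E`. -/
def SpansPath {n : ℕ} (k ℓ a : ℕ) (E : Finset (Finset (Fin n))) {b : ℕ}
    (w : Fin b → Fin n) : Prop :=
  SpansPax k ℓ a 0 E w

/-- The first `ℓ`-end of the ordered tuple `w` (its first `ℓ` vertices, as a set). -/
def firstEnd {n b : ℕ} (ℓ : ℕ) (w : Fin b → Fin n) : Finset (Fin n) :=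
  (Finset.univ.filter (fun m : Fin b => (m : ℕ) < ℓ)).image w

/-- The last `ℓ`-end of the ordered tuple `w` (its last `ℓ` vertices, as a set). -/
def lastEnd {n b : ℕ} (ℓ : ℕ) (w : Fin b → Fin n) : Finset (Fin n) :=
  (Finset.univ.filter (fun m : Fin b => b - ℓ ≤ (m : ℕ))).image w

/-- The `k`-graph with edge set `E` on vertex set `Fin n` contains a Hamiltonian `ℓ`-cycle:
there is a cyclic ordering of all `n` vertices such that each of the `n/(k-ℓ)` edges
consists of `k` consecutive vertices, consecutive edges overlapping in `ℓ` vertices. -/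
def IsHamCycle (n k ℓ : ℕ) (E : Finset (Finset (Fin n))) : Prop :=
  ∃ f : ZMod n → Fin n, Function.Bijective f ∧
    ∀ i < n / (k - ℓ),
      ((Finset.range k).image (fun j => f (((i * (k - ℓ) + j : ℕ) : ZMod n)))) ∈ E

/-- The `ℓ`-shadow of a `k`-graph: all `ℓ`-sets contained in some edge. -/
def shadowL {n : ℕ} (ℓ : ℕ) (E : Finset (Finset (Fin n))) : Finset (Finset (Fin n)) :=
  (Finset.univ.powersetCard ℓ).filter (fun S => ∃ e ∈ E, S ⊆ e)

/-- The list `v` of vertices spans a copy of the `ℓ`-path `P_a` of length `a` in `E`. -/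
def ListSpans {n : ℕ} (k ℓ a : ℕ) (E : Finset (Finset (Fin n))) (v : List (Fin n)) : Prop :=
  v.Nodup ∧ v.length = a * (k - ℓ) + ℓ ∧
    ∀ i < a, ((v.drop (i * (k - ℓ))).take k).toFinset ∈ E

/-- `Φ_F(n,p) = min { n^{v_H} p^{e_H} : H ⊆ F, e_H > 0 }`, where the subgraph `H` is given
by a nonempty edge set `E' ⊆ F` together with a vertex set `W` containing all its edges. -/
noncomputable def Phi {V : Type*} (n : ℕ) (p : ℝ) (F : Finset (Finset V)) : ℝ :=
  sInf {r : ℝ | ∃ (W : Finset V) (E' : Finset (Finset V)),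
    E' ⊆ F ∧ E'.Nonempty ∧ (∀ e ∈ E', e ⊆ W) ∧ r = (n : ℝ) ^ W.card * p ^ E'.card}

/-- The ordered tuple `w` spans a labeled copy of the `k`-graph `F` (given by its edge set
`Fe` on vertex set `Fin s`) in the edge set `E`. -/
def SpansCopy {n s : ℕ} (Fe : Finset (Finset (Fin s))) (E : Finset (Finset (Fin n)))
    (w : Fin s → Fin n) : Prop :=
  ∀ e ∈ Fe, e.image w ∈ E

/-- Concatenation of three ordered tuples. -/
def concat3 {n p q r : ℕ} (A : Fin p → Fin n) (C : Fin q → Fin n) (B : Fin r → Fin n)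
    (m : Fin (p + q + r)) : Fin n :=
  if h : (m : ℕ) < p then A ⟨(m : ℕ), h⟩
  else if h2 : (m : ℕ) < p + q then C ⟨(m : ℕ) - p, by omega⟩
  else B ⟨(m : ℕ) - (p + q), by have := m.isLt; omega⟩

/-- `w`, spanning an `ℓ`-path of length `a`, is a `W`-absorber in `E`: it avoids `W`, and
its vertex set together with `W` spans an `ℓ`-path (of length `a+1` when `|W| = k - ℓ`)
with the same two `ℓ`-ends. -/
def IsAbsorber {n : ℕ} (k ℓ a : ℕ) (E : Finset (Finset (Fin n))) {b : ℕ}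
    (w : Fin b → Fin n) (W : Finset (Fin n)) : Prop :=
  (∀ m, w m ∉ W) ∧
  ∃ w' : Fin (b + W.card) → Fin n, SpansPath k ℓ (a + 1) E w' ∧
    Finset.image w' Finset.univ = Finset.image w Finset.univ ∪ W ∧
    firstEnd ℓ w' = firstEnd ℓ w ∧ lastEnd ℓ w' = lastEnd ℓ w


/-- The number of ordered `b`-tuples of vertices spanning a labeled copy of `P_{a,x}`. -/
noncomputable def paxCount (n k ℓ a x b : ℕ) (E : Finset (Finset (Fin n))) : ℕ :=
  (Finset.univ.filter (fun w : Fin b → Fin n => SpansPax k ℓ a x E w)).card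

/-! Let `X` count the injective tuples spanning `P_{a,x}`. Its mean is at most `μ = p^a n^b`, so by
Chebyshev it suffices that `Var X = o(μ²)`. Two tuples are correlated only when they share a
nonempty set `J` of edges. Any `s` edges of an `ℓ`-path cover at least `s(k-ℓ) + ℓ` vertices, so
at most `b^b n^{b-s(k-ℓ)-ℓ}` tuples use all edges of a given `J` with `|J| = s`. Hence
`Var X ≤ 2^a b^b μ² / M` for every `M` below all the numbers `p^s n^{s(k-ℓ)+ℓ}`, `1 ≤ s ≤ a`, and
for `p ≥ n^{-(k-ℓ)-ε}` one can take `M = n^{ℓ-εa}`.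
-/

section RandomSubset

variable {α ι : Type*} {S : Finset α} {p : ℝ}

/-- Expectation over a random subset of `S` containing each element independently with
probability `p`. It is a linear map in the random variable, so that linearity of expectation is
`map_sub`, `map_sum`, and so on. -/
noncomputable def subsetExpect (S : Finset α) (p : ℝ) : (Finset α → ℝ) →ₗ[ℝ] ℝ :=
  ∑ E ∈ S.powerset, (p ^ #E * (1 - p) ^ (#S - #E)) • LinearMap.proj E

lemma subsetExpect_apply (f : Finset α → ℝ) :
    subsetExpect S p f = ∑ E ∈ S.powerset, p ^ #E * (1 - p) ^ (#S - #E) * f E := by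
  simp [subsetExpect]

lemma subsetExpect_mono (hp0 : 0 ≤ p) (hp1 : p ≤ 1) {f g : Finset α → ℝ} (hfg : ∀ E, f E ≤ g E) :
    subsetExpect S p f ≤ subsetExpect S p g := by
  have : 0 ≤ 1 - p := sub_nonneg.2 hp1
  rw [subsetExpect_apply, subsetExpect_apply]
  gcongr with E
  exact hfg E

lemma gProb_eq_subsetExpect (n k : ℕ) (p : ℝ) (A : Finset (Finset (Fin n)) → Prop) :
    gProb n k p A = subsetExpect (kSets n k) p (fun E => if A E then 1 else 0) := by
  simp only [gProb, subsetExpect_apply, sum_filter, mul_ite, mul_one, mul_zero]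

lemma subsetExpect_const (c : ℝ) : subsetExpect S p (fun _ => c) = c := by
  simp [subsetExpect_apply, ← sum_mul, sum_pow_mul_eq_add_pow]

lemma one_sub_le_subsetExpect_abs_sub_lt (hp0 : 0 ≤ p) (hp1 : p ≤ 1) (f : Finset α → ℝ) (m : ℝ)
    {t : ℝ} (ht : 0 < t) :
    1 - subsetExpect S p (fun E => (f E - m) ^ 2) / t ^ 2 ≤
      subsetExpect S p (fun E => if |f E - m| < t then 1 else 0) := by
  have hpoint : ∀ E, 1 - (t ^ 2)⁻¹ * (f E - m) ^ 2 ≤ if |f E - m| < t then 1 else 0 := by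
    intro E
    split_ifs with h
    · simp only [sub_le_self_iff]
      positivity
    · have : t ^ 2 ≤ (f E - m) ^ 2 := sq_le_sq.2 (by rwa [abs_of_pos ht, ← not_lt])
      rw [sub_nonpos, inv_mul_eq_div]
      exact (one_le_div (by positivity)).2 this
  calc 1 - subsetExpect S p (fun E => (f E - m) ^ 2) / t ^ 2
      = subsetExpect S p ((fun _ => 1) - (t ^ 2)⁻¹ • fun E => (f E - m) ^ 2) := by
        rw [map_sub, map_smul, subsetExpect_const, smul_eq_mul, inv_mul_eq_div]
    _ ≤ _ := subsetExpect_mono hp0 hp1 hpoint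

variable [DecidableEq α]

lemma subsetExpect_superset {F : Finset α} (hF : F ⊆ S) :
    subsetExpect S p (fun E => if F ⊆ E then 1 else 0) = p ^ #F := by
  have hfilter : {E ∈ S.powerset | F ⊆ E} = Icc F S := by ext; simp [and_comm]
  have hdisj : ∀ T ∈ (S \ F).powerset, Disjoint F T := fun T hT =>
    disjoint_sdiff.mono_right (mem_powerset.1 hT)
  have hinj : Set.InjOn (F ∪ ·) ((S \ F).powerset : Set (Finset α)) := fun T hT T' hT' h => by
    simpa [union_sdiff_cancel_left, hdisj T hT, hdisj T' hT'] using congrArg (· \ F) h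
  calc subsetExpect S p (fun E => if F ⊆ E then 1 else 0)
      = ∑ E ∈ Icc F S, p ^ #E * (1 - p) ^ (#S - #E) := by
        simp only [subsetExpect_apply, ← hfilter, sum_filter, mul_ite, mul_one, mul_zero]
    _ = ∑ T ∈ (S \ F).powerset, p ^ #F * (p ^ #T * (1 - p) ^ (#(S \ F) - #T)) := by
        rw [Icc_eq_image_powerset hF, sum_image hinj]
        refine sum_congr rfl fun T hT => ?_
        rw [card_union_of_disjoint (hdisj T hT), card_sdiff_of_subset hF, Nat.sub_sub, pow_add,
          mul_assoc]
    _ = p ^ #F := by simp [← mul_sum, sum_pow_mul_eq_add_pow]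

variable {W : Finset ι} {F : ι → Finset α} {a : ℕ}

lemma subsetExpect_card_filter_subset (hF : ∀ w ∈ W, F w ⊆ S) :
    subsetExpect S p (fun E => (#{w ∈ W | F w ⊆ E} : ℝ)) = ∑ w ∈ W, p ^ #(F w) := by
  have hsum : (fun E => (#{w ∈ W | F w ⊆ E} : ℝ)) =
      ∑ w ∈ W, fun E => if F w ⊆ E then (1 : ℝ) else 0 := by
    ext E
    simp
  rw [hsum, map_sum]
  exact sum_congr rfl fun w hw => subsetExpect_superset (hF w hw)

lemma subsetExpect_card_filter_subset_sq (hF : ∀ w ∈ W, F w ⊆ S) :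
    subsetExpect S p (fun E => (#{w ∈ W | F w ⊆ E} : ℝ) ^ 2) =
      ∑ w ∈ W, ∑ w' ∈ W, p ^ #(F w ∪ F w') := by
  have hsq : ∀ E, #{w ∈ W | F w ⊆ E} ^ 2 = #{q ∈ W ×ˢ W | F q.1 ∪ F q.2 ⊆ E} := fun E => by
    simp only [sq, ← card_product, ← filter_product, union_subset_iff]
  have hF₂ : ∀ q ∈ W ×ˢ W, F q.1 ∪ F q.2 ⊆ S := fun q hq =>
    union_subset (hF _ (mem_product.1 hq).1) (hF _ (mem_product.1 hq).2)
  simp only [← Nat.cast_pow, hsq, subsetExpect_card_filter_subset hF₂, sum_product]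

lemma subsetExpect_card_filter_subset_sub_sq (hF : ∀ w ∈ W, F w ⊆ S) (hc : ∀ w ∈ W, #(F w) = a) :
    subsetExpect S p (fun E => ((#{w ∈ W | F w ⊆ E} : ℝ) - #W * p ^ a) ^ 2) =
      ∑ w ∈ W, ∑ w' ∈ W, (p ^ #(F w ∪ F w') - p ^ (2 * a)) := by
  set X : Finset α → ℝ := fun E => (#{w ∈ W | F w ⊆ E} : ℝ)
  set m : ℝ := #W * p ^ a
  have hmean : subsetExpect S p X = m := by
    rw [subsetExpect_card_filter_subset hF, sum_congr rfl fun w hw => by rw [hc w hw]]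
    simp [m]
  calc subsetExpect S p (fun E => (X E - m) ^ 2)
      = subsetExpect S p ((fun E => X E ^ 2) - (2 * m) • X + fun _ => m ^ 2) := by
        congr 1
        ext E
        simp only [Pi.add_apply, Pi.sub_apply, Pi.smul_apply, smul_eq_mul]
        ring
    _ = ∑ w ∈ W, ∑ w' ∈ W, p ^ #(F w ∪ F w') - m ^ 2 := by
        rw [map_add, map_sub, map_smul, subsetExpect_const, hmean,
          subsetExpect_card_filter_subset_sq hF, smul_eq_mul]
        ring
    _ = _ := by
        simp only [sum_sub_distrib, sum_const, nsmul_eq_mul, m]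
        ring

lemma pow_card_union_sub_le (hp0 : 0 ≤ p) {A B : Finset α} (hA : #A = a) (hB : #B = a) :
    p ^ #(A ∪ B) - p ^ (2 * a) ≤
      ∑ J ∈ A.powerset with J.Nonempty, if J ⊆ B then p ^ (2 * a - #J) else 0 := by
  have hnonneg : ∀ J ∈ {J ∈ A.powerset | J.Nonempty},
      0 ≤ if J ⊆ B then p ^ (2 * a - #J) else 0 := fun J _ => by positivity
  have hcard : #(A ∪ B) = 2 * a - #(A ∩ B) := by
    have := card_union_add_card_inter A B
    omega
  rw [hcard]
  rcases (A ∩ B).eq_empty_or_nonempty with hAB | hAB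
  · simpa [hAB] using sum_nonneg hnonneg
  · have hmem : A ∩ B ∈ {J ∈ A.powerset | J.Nonempty} := by
      simp [hAB, inter_subset_left]
    have hterm := single_le_sum hnonneg hmem
    rw [if_pos inter_subset_right] at hterm
    exact (sub_le_self _ (by positivity)).trans hterm

lemma subsetExpect_card_filter_subset_sub_sq_le (hp0 : 0 ≤ p) (hF : ∀ w ∈ W, F w ⊆ S)
    (hc : ∀ w ∈ W, #(F w) = a) {D : ℝ} (hD0 : 0 ≤ D)
    (hD : ∀ w ∈ W, ∀ J ⊆ F w, J.Nonempty → (#{w' ∈ W | J ⊆ F w'} : ℝ) ≤ D * p ^ #J) :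
    subsetExpect S p (fun E => ((#{w ∈ W | F w ⊆ E} : ℝ) - #W * p ^ a) ^ 2) ≤
      #W * (2 ^ a * (D * p ^ (2 * a))) := by
  rw [subsetExpect_card_filter_subset_sub_sq hF hc, ← nsmul_eq_mul]
  refine sum_le_card_nsmul _ _ _ fun w hw => ?_
  have hoverlap : ∀ J ∈ {J ∈ (F w).powerset | J.Nonempty},
      ∑ w' ∈ W, (if J ⊆ F w' then p ^ (2 * a - #J) else 0) ≤ D * p ^ (2 * a) := by
    intro J hJ
    obtain ⟨hJw, hJ⟩ := mem_filter.1 hJ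
    have hJa : #J ≤ 2 * a := by
      have := card_le_card (mem_powerset.1 hJw)
      rw [hc w hw] at this
      omega
    calc ∑ w' ∈ W, (if J ⊆ F w' then p ^ (2 * a - #J) else 0)
        = #{w' ∈ W | J ⊆ F w'} * p ^ (2 * a - #J) := by
          rw [← sum_filter, sum_const, nsmul_eq_mul]
      _ ≤ D * p ^ #J * p ^ (2 * a - #J) := by
          gcongr
          exact hD w hw J (mem_powerset.1 hJw) hJ
      _ = D * p ^ (2 * a) := by rw [mul_assoc, ← pow_add, Nat.add_sub_cancel' hJa]
  have hcard : #{J ∈ (F w).powerset | J.Nonempty} ≤ 2 ^ a :=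
    (card_filter_le _ _).trans (by rw [card_powerset, hc w hw])
  calc ∑ w' ∈ W, (p ^ #(F w ∪ F w') - p ^ (2 * a))
      ≤ ∑ w' ∈ W, ∑ J ∈ (F w).powerset with J.Nonempty,
          if J ⊆ F w' then p ^ (2 * a - #J) else 0 :=
        sum_le_sum fun w' hw' => pow_card_union_sub_le hp0 (hc w hw) (hc w' hw')
    _ ≤ #{J ∈ (F w).powerset | J.Nonempty} * (D * p ^ (2 * a)) := by
        rw [sum_comm, ← nsmul_eq_mul]
        exact sum_le_card_nsmul _ _ _ hoverlap
    _ ≤ 2 ^ a * (D * p ^ (2 * a)) := by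
        gcongr
        exact_mod_cast hcard

end RandomSubset

section Tuple

variable {β V : Type*} [Fintype β] [Fintype V] [DecidableEq β] [DecidableEq V]

-- The entry at `m` may be overwritten freely without uncovering `T`.
lemma card_filter_subset_image_apply_eq_mul_le {T : Finset V} {v : V} (hv : v ∉ T) (m : β) :
    #{w : β → V | T ⊆ univ.image w ∧ w m = v} * Fintype.card V ≤
      #{w : β → V | T ⊆ univ.image w} := by
  rw [← card_univ (α := V), ← card_product]
  refine card_le_card_of_injOn (fun q => Function.update q.1 m q.2) ?_ ?_
  · rintro ⟨w, u⟩ hw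
    simp only [coe_product, Set.mem_prod, mem_coe, mem_filter, mem_univ, true_and, and_true,
      subset_iff, mem_image] at hw ⊢
    obtain ⟨hT, hm⟩ := hw
    intro y hy
    obtain ⟨i, rfl⟩ := hT hy
    exact ⟨i, Function.update_of_ne (by rintro rfl; exact hv (hm ▸ hy)) _ _⟩
  · rintro ⟨w, u⟩ hw ⟨w', u'⟩ hw' h
    simp only [coe_product, Set.mem_prod, mem_coe, mem_filter, mem_univ, true_and,
      and_true] at hw hw' h
    have hu : u = u' := by simpa using congrFun h m
    have hww' : w = w' := by
      rw [← Function.update_eq_self m w, ← Function.update_eq_self m w', hw.2, hw'.2]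
      simpa using congrArg (Function.update · m v) h
    rw [hu, hww']

lemma card_filter_insert_subset_image_mul_le {T : Finset V} {v : V} (hv : v ∉ T) :
    #{w : β → V | insert v T ⊆ univ.image w} * Fintype.card V ≤
      Fintype.card β * #{w : β → V | T ⊆ univ.image w} := by
  have hcover : #{w : β → V | insert v T ⊆ univ.image w} ≤
      ∑ m : β, #{w : β → V | T ⊆ univ.image w ∧ w m = v} := by
    refine (card_le_card fun w hw => ?_).trans card_biUnion_le
    simp only [mem_filter, mem_univ, true_and, insert_subset_iff, mem_biUnion] at hw ⊢
    obtain ⟨m, -, hm⟩ := mem_image.1 hw.1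
    exact ⟨m, hw.2, hm⟩
  calc #{w : β → V | insert v T ⊆ univ.image w} * Fintype.card V
      ≤ ∑ m : β, #{w : β → V | T ⊆ univ.image w ∧ w m = v} * Fintype.card V := by
        rw [← sum_mul]
        gcongr
    _ ≤ ∑ _m : β, #{w : β → V | T ⊆ univ.image w} :=
        sum_le_sum fun m _ => card_filter_subset_image_apply_eq_mul_le hv m
    _ = Fintype.card β * #{w : β → V | T ⊆ univ.image w} := by
        rw [sum_const, smul_eq_mul, card_univ]

lemma card_filter_subset_image_mul_le (T : Finset V) :
    #{w : β → V | T ⊆ univ.image w} * Fintype.card V ^ #T ≤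
      Fintype.card β ^ #T * Fintype.card V ^ Fintype.card β := by
  induction T using Finset.induction_on with
  | empty => simp
  | insert v T hv ih =>
    rw [card_insert_of_notMem hv, pow_succ', pow_succ', ← mul_assoc, mul_assoc (Fintype.card β)]
    calc #{w : β → V | insert v T ⊆ univ.image w} * Fintype.card V * Fintype.card V ^ #T
        ≤ Fintype.card β * #{w : β → V | T ⊆ univ.image w} * Fintype.card V ^ #T := by
          gcongr ?_ * _
          exact card_filter_insert_subset_image_mul_le hv
      _ ≤ Fintype.card β * (Fintype.card β ^ #T * Fintype.card V ^ Fintype.card β) := by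
          rw [mul_assoc]
          gcongr

end Tuple

section Path

lemma edgeIdx_eq_Ico (k d x i : ℕ) : edgeIdx k d x i = Ico (x + i * d) (x + i * d + k) := by
  ext m
  simp only [edgeIdx, mem_image, mem_range, mem_Ico]
  exact ⟨by rintro ⟨j, hj, rfl⟩; omega, fun h => ⟨m - (x + i * d), by omega, by omega⟩⟩

variable {k ℓ a x : ℕ}

lemma card_mul_add_le_card_biUnion_edgeIdx (hlk : ℓ ≤ k) {I : Finset ℕ} (hI : I.Nonempty) :
    #I * (k - ℓ) + ℓ ≤ #(I.biUnion (edgeIdx k (k - ℓ) x)) := by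
  induction I using Finset.induction_on_max with
  | empty => exact absurd hI not_nonempty_empty
  | insert i I hlt ih =>
    have hi : i ∉ I := fun h => (hlt i h).false
    rcases I.eq_empty_or_nonempty with rfl | hI
    · simp [edgeIdx_eq_Ico, hlk]
    -- The last `k - ℓ` positions of the rightmost edge lie beyond all earlier edges.
    have hnew : Disjoint (Ico (x + i * (k - ℓ) + ℓ) (x + i * (k - ℓ) + k))
        (I.biUnion (edgeIdx k (k - ℓ) x)) := by
      simp only [disjoint_biUnion_right, edgeIdx_eq_Ico]
      intro j hj
      have : (j + 1) * (k - ℓ) ≤ i * (k - ℓ) := Nat.mul_le_mul_right _ (hlt j hj)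
      rw [add_one_mul] at this
      exact disjoint_left.2 fun m hm hm' => by
        rw [mem_Ico] at hm hm'
        omega
    calc #(insert i I) * (k - ℓ) + ℓ = (k - ℓ) + (#I * (k - ℓ) + ℓ) := by
          rw [card_insert_of_notMem hi]
          ring
      _ ≤ #(Ico (x + i * (k - ℓ) + ℓ) (x + i * (k - ℓ) + k)) +
            #(I.biUnion (edgeIdx k (k - ℓ) x)) := by
          gcongr
          · rw [Nat.card_Ico]
            omega
          · exact ih hI
      _ ≤ #((insert i I).biUnion (edgeIdx k (k - ℓ) x)) := by
          rw [← card_union_of_disjoint hnew, biUnion_insert, edgeIdx_eq_Ico]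
          exact card_le_card
            (union_subset_union_left (Ico_subset_Ico_left (Nat.le_add_right _ _)))

lemma edgeIdx_subset_range (hlk : ℓ ≤ k) {b i : ℕ} (hb : x + ℓ + (k - ℓ) * a ≤ b) (hi : i < a) :
    edgeIdx k (k - ℓ) x i ⊆ range b := by
  intro m hm
  have : (i + 1) * (k - ℓ) ≤ a * (k - ℓ) := Nat.mul_le_mul_right _ hi
  rw [add_one_mul] at this
  rw [edgeIdx_eq_Ico, mem_Ico] at hm
  rw [mul_comm] at hb
  exact mem_range.2 (by omega)

variable {n b : ℕ} {w : Fin b → Fin n}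

/-- The vertices of the tuple `w` at the positions in `P`; positions outside `range b` are
ignored. -/
def tupleImage (w : Fin b → Fin n) (P : Finset ℕ) : Finset (Fin n) :=
  image w {m : Fin b | (m : ℕ) ∈ P}

lemma card_tupleImage (hw : Function.Injective w) {P : Finset ℕ} (hP : P ⊆ range b) :
    #(tupleImage w P) = #P := by
  have hval : (univ.filter fun m : Fin b => (m : ℕ) ∈ P).image Fin.val = P := by
    ext m
    simp only [mem_image, mem_filter, mem_univ, true_and]
    exact ⟨by rintro ⟨i, hi, rfl⟩; exact hi, fun hm => ⟨⟨m, mem_range.1 (hP hm)⟩, hm, rfl⟩⟩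
  rw [tupleImage, card_image_of_injective _ hw, ← card_image_of_injective _ Fin.val_injective, hval]

lemma tupleImage_biUnion (w : Fin b → Fin n) (I : Finset ℕ) (P : ℕ → Finset ℕ) :
    tupleImage w (I.biUnion P) = I.biUnion fun i => tupleImage w (P i) := by
  ext v
  simp only [tupleImage, mem_image, mem_filter, mem_univ, true_and, mem_biUnion]
  exact ⟨fun ⟨m, ⟨i, hi, hm⟩, hv⟩ => ⟨i, hi, m, hm, hv⟩,
    fun ⟨i, hi, m, hm, hv⟩ => ⟨m, ⟨i, hi, hm⟩, hv⟩⟩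

/-- The edge set of the copy of `P_{a,x}` placed on the tuple `w`. -/
def paxEdges (k ℓ a x : ℕ) (w : Fin b → Fin n) : Finset (Finset (Fin n)) :=
  (range a).image fun i => tupleImage w (edgeIdx k (k - ℓ) x i)

lemma spansPax_iff {E : Finset (Finset (Fin n))} :
    SpansPax k ℓ a x E w ↔ Function.Injective w ∧ paxEdges k ℓ a x w ⊆ E := by
  simp only [SpansPax, paxEdges, tupleImage, image_subset_iff, mem_range]

lemma paxCount_eq (E : Finset (Finset (Fin n))) :
    paxCount n k ℓ a x b E =
      #{w ∈ {w : Fin b → Fin n | Function.Injective w} | paxEdges k ℓ a x w ⊆ E} := by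
  simp only [paxCount, spansPax_iff, filter_filter]

lemma card_mul_add_le_card_biUnion_tupleImage (hlk : ℓ ≤ k) (hb : x + ℓ + (k - ℓ) * a ≤ b)
    (hw : Function.Injective w) {I : Finset ℕ} (hIa : I ⊆ range a) (hI : I.Nonempty) :
    #I * (k - ℓ) + ℓ ≤ #(I.biUnion fun i => tupleImage w (edgeIdx k (k - ℓ) x i)) := by
  rw [← tupleImage_biUnion, card_tupleImage hw
    (biUnion_subset.2 fun i hi => edgeIdx_subset_range hlk hb (mem_range.1 (hIa hi)))]
  exact card_mul_add_le_card_biUnion_edgeIdx hlk hI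

lemma card_of_mem_paxEdges (hlk : ℓ ≤ k) (hb : x + ℓ + (k - ℓ) * a ≤ b)
    (hw : Function.Injective w) {e : Finset (Fin n)} (he : e ∈ paxEdges k ℓ a x w) : #e = k := by
  obtain ⟨i, hi, rfl⟩ := mem_image.1 he
  rw [card_tupleImage hw (edgeIdx_subset_range hlk hb (mem_range.1 hi)), edgeIdx_eq_Ico,
    Nat.card_Ico, Nat.add_sub_cancel_left]

lemma paxEdges_subset_kSets (hlk : ℓ ≤ k) (hb : x + ℓ + (k - ℓ) * a ≤ b)
    (hw : Function.Injective w) : paxEdges k ℓ a x w ⊆ kSets n k := fun _ he =>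
  mem_powersetCard.2 ⟨subset_univ _, card_of_mem_paxEdges hlk hb hw he⟩

lemma card_paxEdges (hlk : ℓ < k) (hb : x + ℓ + (k - ℓ) * a ≤ b) (hw : Function.Injective w) :
    #(paxEdges k ℓ a x w) = a := by
  rw [paxEdges, card_image_of_injOn, card_range]
  intro i hi j hj hij
  by_contra hne
  have hcover := card_mul_add_le_card_biUnion_tupleImage (x := x) (I := {i, j}) hlk.le hb hw
    (by simpa [insert_subset_iff] using And.intro hi hj) (insert_nonempty _ _)
  have hcard := card_of_mem_paxEdges hlk.le hb hw (mem_image_of_mem _ hj)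
  simp only [biUnion_insert, singleton_biUnion, card_pair hne] at hcover
  simp only at hij hcard
  rw [hij, union_self, hcard] at hcover
  omega

lemma card_mul_add_le_card_biUnion_id (hlk : ℓ ≤ k) (hb : x + ℓ + (k - ℓ) * a ≤ b)
    (hw : Function.Injective w) {J : Finset (Finset (Fin n))} (hJw : J ⊆ paxEdges k ℓ a x w)
    (hJ : J.Nonempty) : #J * (k - ℓ) + ℓ ≤ #(J.biUnion id) := by
  obtain ⟨I, hIa, rfl⟩ := subset_image_iff.1 hJw
  rw [image_biUnion]
  calc _ ≤ #I * (k - ℓ) + ℓ := by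
        gcongr
        exact card_image_le
    _ ≤ _ := card_mul_add_le_card_biUnion_tupleImage hlk hb hw (by exact_mod_cast hIa)
        (image_nonempty.1 hJ)

lemma biUnion_id_subset_of_subset_paxEdges {J : Finset (Finset (Fin n))}
    (hJ : J ⊆ paxEdges k ℓ a x w) : J.biUnion id ⊆ univ.image w := by
  refine biUnion_subset.2 fun e he => ?_
  obtain ⟨i, -, rfl⟩ := mem_image.1 (hJ he)
  exact image_subset_image (subset_univ _)

lemma card_filter_subset_paxEdges_mul_le (hlk : ℓ ≤ k) (hb : x + ℓ + (k - ℓ) * a ≤ b)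
    (hn : 0 < n) (hw : Function.Injective w) {J : Finset (Finset (Fin n))}
    (hJw : J ⊆ paxEdges k ℓ a x w) (hJ : J.Nonempty) :
    #{w' : Fin b → Fin n | J ⊆ paxEdges k ℓ a x w'} * n ^ (#J * (k - ℓ) + ℓ) ≤ b ^ b * n ^ b := by
  set T := J.biUnion id
  have hTb : #T ≤ b :=
    (card_le_card (biUnion_id_subset_of_subset_paxEdges hJw)).trans
      (card_image_le.trans_eq (card_fin b))
  have hpow : b ^ #T ≤ b ^ b := by
    rcases b.eq_zero_or_pos with rfl | hb0
    · rw [Nat.le_zero.1 hTb]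
    · exact Nat.pow_le_pow_right hb0 hTb
  calc #{w' : Fin b → Fin n | J ⊆ paxEdges k ℓ a x w'} * n ^ (#J * (k - ℓ) + ℓ)
      ≤ #{w' : Fin b → Fin n | T ⊆ univ.image w'} * n ^ #T := by
        gcongr
        · exact fun h => biUnion_id_subset_of_subset_paxEdges h
        · exact card_mul_add_le_card_biUnion_id hlk hb hw hJw hJ
    _ ≤ b ^ #T * n ^ b := by simpa using card_filter_subset_image_mul_le (β := Fin b) T
    _ ≤ b ^ b * n ^ b := by gcongr

lemma subsetExpect_paxCount_sub_sq_le (hlk : ℓ < k) (hb : x + ℓ + (k - ℓ) * a ≤ b)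
    (hn : 0 < n) {p M : ℝ} (hp : 0 ≤ p) (hM0 : 0 < M)
    (hM : ∀ s, 1 ≤ s → s ≤ a → M ≤ p ^ s * n ^ (s * (k - ℓ) + ℓ)) :
    subsetExpect (kSets n k) p (fun E => ((paxCount n k ℓ a x b E : ℝ) -
        #{w : Fin b → Fin n | Function.Injective w} * p ^ a) ^ 2) ≤
      2 ^ a * b ^ b / M * (p ^ a * n ^ b) ^ 2 := by
  set W : Finset (Fin b → Fin n) := {w | Function.Injective w}
  have hinj : ∀ w ∈ W, Function.Injective w := fun w hw => (mem_filter.1 hw).2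
  have hoverlap : ∀ w ∈ W, ∀ J ⊆ paxEdges k ℓ a x w, J.Nonempty →
      (#{w' ∈ W | J ⊆ paxEdges k ℓ a x w'} : ℝ) ≤ b ^ b * n ^ b / M * p ^ #J := by
    intro w hw J hJw hJ
    have hJa : #J ≤ a := (card_le_card hJw).trans_eq (card_paxEdges hlk hb (hinj w hw))
    have hcount : #{w' ∈ W | J ⊆ paxEdges k ℓ a x w'} * n ^ (#J * (k - ℓ) + ℓ) ≤ b ^ b * n ^ b :=
      (Nat.mul_le_mul_right _ (card_le_card (filter_subset_filter _ (subset_univ W)))).trans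
        (card_filter_subset_paxEdges_mul_le hlk.le hb hn (hinj w hw) hJw hJ)
    rw [div_mul_eq_mul_div, le_div_iff₀ hM0]
    calc (#{w' ∈ W | J ⊆ paxEdges k ℓ a x w'} : ℝ) * M
        ≤ #{w' ∈ W | J ⊆ paxEdges k ℓ a x w'} * (p ^ #J * n ^ (#J * (k - ℓ) + ℓ)) := by
          gcongr
          exact hM _ hJ.card_pos hJa
      _ = #{w' ∈ W | J ⊆ paxEdges k ℓ a x w'} * n ^ (#J * (k - ℓ) + ℓ) * p ^ #J := by ring
      _ ≤ b ^ b * n ^ b * p ^ #J :=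
          mul_le_mul_of_nonneg_right (mod_cast hcount) (by positivity)
  simp only [paxCount_eq]
  calc _ ≤ #W * (2 ^ a * (b ^ b * n ^ b / M * p ^ (2 * a))) :=
        subsetExpect_card_filter_subset_sub_sq_le hp
          (fun w hw => paxEdges_subset_kSets hlk.le hb (hinj w hw))
          (fun w hw => card_paxEdges hlk hb (hinj w hw)) (by positivity) hoverlap
    _ ≤ n ^ b * (2 ^ a * (b ^ b * n ^ b / M * p ^ (2 * a))) := by
        gcongr
        exact_mod_cast (card_le_univ W).trans_eq (by simp)
    _ = 2 ^ a * b ^ b / M * (p ^ a * n ^ b) ^ 2 := by ring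

lemma one_sub_le_gProb_paxCount_le (hlk : ℓ < k) (hb : x + ℓ + (k - ℓ) * a ≤ b) (hn : 0 < n)
    {p M : ℝ} (hp0 : 0 < p) (hp1 : p ≤ 1) (hM0 : 0 < M)
    (hM : ∀ s, 1 ≤ s → s ≤ a → M ≤ p ^ s * n ^ (s * (k - ℓ) + ℓ)) :
    1 - 2 ^ a * b ^ b / M ≤
      gProb n k p (fun E => (paxCount n k ℓ a x b E : ℝ) ≤ 2 * p ^ a * n ^ b) := by
  set μ : ℝ := p ^ a * n ^ b
  set m : ℝ := #{w : Fin b → Fin n | Function.Injective w} * p ^ a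
  have hμ : 0 < μ := by positivity
  have hmμ : m ≤ μ := by
    simp only [m, μ, mul_comm (p ^ a)]
    gcongr
    exact_mod_cast (card_le_univ _).trans_eq (by simp)
  calc 1 - 2 ^ a * b ^ b / M
      ≤ 1 - subsetExpect (kSets n k) p (fun E => ((paxCount n k ℓ a x b E : ℝ) - m) ^ 2) / μ ^ 2 :=
        sub_le_sub_left ((div_le_iff₀ (by positivity)).2
          (subsetExpect_paxCount_sub_sq_le hlk hb hn hp0.le hM0 hM)) _
    _ ≤ subsetExpect (kSets n k) p
          (fun E => if |(paxCount n k ℓ a x b E : ℝ) - m| < μ then 1 else 0) :=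
        one_sub_le_subsetExpect_abs_sub_lt hp0.le hp1 _ _ hμ
    _ ≤ gProb n k p (fun E => (paxCount n k ℓ a x b E : ℝ) ≤ 2 * p ^ a * n ^ b) := by
        rw [gProb_eq_subsetExpect]
        refine subsetExpect_mono hp0.le hp1 fun E => ?_
        split_ifs with hdev hle
        · rfl
        · refine absurd ?_ hle
          rw [mul_assoc]
          linarith [(abs_lt.1 hdev).2]
        · exact zero_le_one
        · rfl

end Path

lemma rpow_le_pow_mul_pow {N p ε : ℝ} {d ℓ s a : ℕ} (hN : 1 ≤ N) (hε : 0 ≤ ε) (hs : s ≤ a)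
    (hp : N ^ (-(d : ℝ) - ε) ≤ p) : N ^ (ℓ - ε * a) ≤ p ^ s * N ^ (s * d + ℓ) := by
  have hN0 : 0 < N := one_pos.trans_le hN
  calc N ^ (ℓ - ε * a) ≤ N ^ ((-(d : ℝ) - ε) * s + (s * d + ℓ : ℕ)) := by
        refine Real.rpow_le_rpow_of_exponent_le hN ?_
        have : ε * s ≤ ε * a := by gcongr
        push_cast
        linarith
    _ = (N ^ (-(d : ℝ) - ε)) ^ s * N ^ (s * d + ℓ) := by
        rw [Real.rpow_add hN0, Real.rpow_mul_natCast hN0.le, Real.rpow_natCast]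
    _ ≤ p ^ s * N ^ (s * d + ℓ) := by gcongr

lemma rpow_le_of_density_bounds {N p ε C : ℝ} {k ℓ : ℕ} (hN : 1 ≤ N) (hC : 1 ≤ C) (hℓ : 1 ≤ ℓ)
    (hε : 0 ≤ ε) (hp : 2 ≤ ℓ → N ^ (-((k : ℝ) - ℓ) - ε) ≤ p)
    (hp₁ : ℓ = 1 → C * N ^ (-((k : ℝ) - 1)) ≤ p) : N ^ (-((k : ℝ) - ℓ) - ε) ≤ p := by
  rcases hℓ.eq_or_lt with rfl | hℓ
  · calc N ^ (-((k : ℝ) - (1 : ℕ)) - ε) ≤ N ^ (-((k : ℝ) - 1)) :=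
          Real.rpow_le_rpow_of_exponent_le hN (by push_cast; linarith)
      _ ≤ C * N ^ (-((k : ℝ) - 1)) := le_mul_of_one_le_left (by positivity) hC
      _ ≤ p := hp₁ rfl
  · exact hp hℓ

theorem few_pax_copies_general (k ℓ a x : ℕ) (hlk : ℓ < k) {ε : ℝ} (hε0 : 0 ≤ ε)
    (hε : ε * a < ℓ) {δ : ℝ} (hδ : 0 < δ) :
    ∀ᶠ n : ℕ in Filter.atTop, ∀ p : ℝ, p ≤ 1 → (n : ℝ) ^ (-((k : ℝ) - ℓ) - ε) ≤ p →
      1 - δ ≤ gProb n k p (fun E =>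
        (paxCount n k ℓ a x (2 * x + ℓ + (k - ℓ) * a) E : ℝ) ≤
          2 * p ^ a * (n : ℝ) ^ (2 * x + ℓ + (k - ℓ) * a)) := by
  set b := 2 * x + ℓ + (k - ℓ) * a
  have hlim : Filter.Tendsto (fun n : ℕ => 2 ^ a * (b : ℝ) ^ b / (n : ℝ) ^ (ℓ - ε * a))
      Filter.atTop (nhds 0) :=
    ((tendsto_rpow_atTop (sub_pos.2 hε)).comp tendsto_natCast_atTop_atTop).const_div_atTop _
  filter_upwards [hlim.eventually_le_const hδ, Filter.eventually_gt_atTop 0] with n hδn hn p hp1 hp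
  have hn1 : (1 : ℝ) ≤ n := by exact_mod_cast hn
  refine (sub_le_sub_left hδn 1).trans (one_sub_le_gProb_paxCount_le hlk (by omega) hn
    (lt_of_lt_of_le (by positivity) hp) hp1 (by positivity) fun s _ hs =>
      rpow_le_pow_mul_pow hn1 hε0 hs ?_)
  rwa [Nat.cast_sub hlk.le]

/-- Lemma 2.2(2). With probability `1 - o(1)`, at most `2 p^a n^b`
ordered `b`-subsets of the vertex set span copies of `P_{a,x}`. -/
theorem few_pax_copies
    (k ℓ a x : ℕ) (hk : 3 ≤ k) (hl1 : 1 ≤ ℓ) (hlk : ℓ ≤ k - 1)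
    (ha : 1 ≤ a) (hx : x ≤ k)
    (ε : ℝ) (hε0 : 0 < ε) (hε : ε ≤ (ℓ : ℝ) / (3 * (a : ℝ)))
    (γ : ℝ) (hγ : 0 < γ) :
    ∃ C₀ : ℕ, ∀ C : ℕ, C₀ ≤ C →
      ∀ δ : ℝ, 0 < δ → ∃ n₀ : ℕ, ∀ n : ℕ, n₀ ≤ n →
        ∀ p : ℝ, 0 ≤ p → p ≤ 1 →
          ((2 ≤ ℓ → (n : ℝ) ^ (-((k : ℝ) - (ℓ : ℝ)) - ε) ≤ p) ∧
           (ℓ = 1 → (C : ℝ) * (n : ℝ) ^ (-((k : ℝ) - 1)) ≤ p)) →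
          1 - δ ≤ gProb n k p (fun E =>
            (paxCount n k ℓ a x (2 * x + ℓ + (k - ℓ) * a) E : ℝ) ≤
              2 * p ^ a * (n : ℝ) ^ (2 * x + ℓ + (k - ℓ) * a)) := by
  refine ⟨1, fun C hC δ hδ => ?_⟩
  have ha0 : (0 : ℝ) < a := by exact_mod_cast ha
  have hℓ0 : (0 : ℝ) < ℓ := by exact_mod_cast hl1
  have hεa : ε * a < ℓ := by
    rw [le_div_iff₀ (by positivity)] at hε
    linarith
  obtain ⟨n₀, hn₀⟩ := Filter.eventually_atTop.1
    ((few_pax_copies_general k ℓ a x (by omega) hε0.le hεa hδ).and (Filter.eventually_ge_atTop 1))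
  refine ⟨n₀, fun n hn p _ hp1 hp => (hn₀ n hn).1 p hp1 ?_⟩
  exact rpow_le_of_density_bounds (mod_cast (hn₀ n hn).2) (mod_cast hC) hl1 hε0.le hp.1 hp.2
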